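/- Let b ≥ 2 be an integer and E = {0}. Then K(b,{0}) = b·log(b) + Σ_{m=1}^∞ (−1)^{m−1}·ζ(m+1)·u_m/b^{m+1}, where u_m = ∫_{[0,1)} x^m dμ_{b,{0}}(x); moreover the sequence (u_m)_{m≥1} is positive and strictly decreasing, so this is an alternating series with terms of decreasing absolute value. -/

import Mathlib

open MeasureTheory Real ENNReal

/-- The digamma function `ψ(x) = d/dx log Γ(x)`. -/
noncomputable def digamma (x : ℝ) : ℝ := deriv (fun y => Real.log (Real.Gamma y)) x

/-- The Kempner sum `K(b,E)`: sum of reciprocals of positive integers whose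
base-`b` digits all avoid the excluded set `E`. -/
noncomputable def kempnerSum (b : ℕ) (E : Finset ℕ) : ℝ :=
  ∑' n : ℕ, if n ≠ 0 ∧ ∀ d ∈ Nat.digits b n, d ∉ E then (n : ℝ)⁻¹ else 0

/-- The measure `μ_{b,E}` on `[0,1)`: the sum, over all finite strings of admissible
digits (digits `< b` not in `E`), of the weighted Dirac mass `b^{-l} δ_{n(X)/b^l}`. -/
noncomputable def kempnerMeasure (b : ℕ) (E : Finset ℕ) : Measure ℝ :=
  Measure.sum (fun X : {l : List ℕ // ∀ d ∈ l, d < b ∧ d ∉ E} =>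
    ((b : ℝ≥0∞) ^ X.1.length)⁻¹ •
      Measure.dirac (((Nat.ofDigits b X.1 : ℕ) : ℝ) / (b : ℝ) ^ X.1.length))

/-- `E₁ = E` if `0 ∉ E`, and `E₁ = (E ∪ {b}) \ {0}` if `0 ∈ E`. -/
def Eone (b : ℕ) (E : Finset ℕ) : Finset ℕ :=
  if 0 ∈ E then insert b (E.erase 0) else E

/-- `ζ(s) = ∑_{k ≥ 1} k⁻ˢ`. -/
noncomputable def zetaVal (s : ℕ) : ℝ := ∑' k : ℕ, (((k : ℝ) + 1) ^ s)⁻¹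

/-- `v_m(d) = ∫_{[0,1)} (d - x)^m dμ_{b,E}(x)`. -/
noncomputable def vMoment (b : ℕ) (E : Finset ℕ) (m : ℕ) (d : ℝ) : ℝ :=
  ∫ x in Set.Ico (0 : ℝ) 1, (d - x) ^ m ∂(kempnerMeasure b E)

/-- `u_m = ∫_{[0,1)} x^m dμ_{b,{0}}(x)`. -/
noncomputable def uMoment (b : ℕ) (m : ℕ) : ℝ :=
  ∫ x in Set.Ico (0 : ℝ) 1, x ^ m ∂(kempnerMeasure b {0})

/-!
Let `U(z) = ∫ (z + x)⁻¹ dμ(x)` for `μ = μ_{b,E}`. Splitting off the leading digit of a string shows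
that `μ` is the sum of `δ₀` and of `b⁻¹` times its images under `x ↦ (a + x) / b`, `a ∈ A`, so that
`U(z) = 1/z + ∑_{a ∈ A} U(bz + a)`. For `E = {0}` the strings correspond to the integers with no
zero digit, and `K = ∑_{1 ≤ a < b} U(a)`. Applying the functional equation to `U(1), U(2), …` in
turn moves this sum to larger and larger arguments:
`K = ∑_{N ≤ k < bN} U(k) + ∑_{1 ≤ n < N} (1/n - U(bn))`.
As `μ` has mass `b`, `U(k)` lies between `b/(k+1)` and `b/k`, hence the first sum tends to
`b log b`. Finally `1/n - U(bn)` is expanded in powers of `1/(bn)` with the moments of `μ` as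
coefficients, and summing over `n` first produces the values of `ζ`.
-/

section Telescoping

variable {G : Type*} [AddCommGroup G] {b : ℕ} {f g : ℕ → G}

lemma sum_Ico_mul_eq_of_digit_recursion (hb : 1 ≤ b) {n : ℕ}
    (h : f n = g n + ∑ i ∈ Finset.Ico 1 b, f (b * n + i)) :
    ∑ k ∈ Finset.Ico n (b * n), f k =
      ∑ k ∈ Finset.Ico (n + 1) (b * (n + 1)), f k + (g n - f (b * n)) := by
  have hle : n ≤ b * n := Nat.le_mul_of_pos_left n hb
  have hlt : n < b * (n + 1) := (Nat.lt_succ_self n).trans_le (Nat.le_mul_of_pos_left _ hb)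
  have block : ∑ k ∈ Finset.Ico (b * n) (b * (n + 1)), f k =
      f (b * n) + ∑ i ∈ Finset.Ico 1 b, f (b * n + i) := by
    rw [Finset.sum_eq_sum_Ico_succ_bot (by lia), Finset.sum_Ico_add, mul_add_one, add_comm 1,
      add_comm b]
  have split : ∑ k ∈ Finset.Ico n (b * n), f k + ∑ k ∈ Finset.Ico (b * n) (b * (n + 1)), f k =
      f n + ∑ k ∈ Finset.Ico (n + 1) (b * (n + 1)), f k := by
    rw [Finset.sum_Ico_consecutive _ hle (by gcongr; exact n.le_succ),
      Finset.sum_eq_sum_Ico_succ_bot hlt]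
  rw [block, h] at split
  rw [← add_left_inj (f (b * n) + ∑ i ∈ Finset.Ico 1 b, f (b * n + i)), split]
  abel

lemma sum_Ico_eq_add_sum_range_of_digit_recursion (hb : 1 ≤ b)
    (h : ∀ n, 1 ≤ n → f n = g n + ∑ i ∈ Finset.Ico 1 b, f (b * n + i)) (N : ℕ) :
    ∑ k ∈ Finset.Ico 1 b, f k = ∑ k ∈ Finset.Ico (N + 1) (b * (N + 1)), f k +
      ∑ k ∈ Finset.range N, (g (k + 1) - f (b * (k + 1))) := by
  induction N with
  | zero => simp
  | succ N ih =>
    rw [ih, sum_Ico_mul_eq_of_digit_recursion hb (h (N + 1) N.succ_pos), Finset.sum_range_succ]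
    abel

end Telescoping

section Logarithm

open Filter Topology

variable {c : ℝ} {f : ℕ → ℝ}

lemma log_add_one_sub_log_mem_Icc {x : ℝ} (hx : 0 < x) :
    Real.log (x + 1) - Real.log x ∈ Set.Icc (x + 1)⁻¹ x⁻¹ := by
  have hx1 : 0 < x + 1 := by positivity
  have hdiv : 0 < (x + 1) / x := div_pos hx1 hx
  rw [← Real.log_div hx1.ne' hx.ne']
  refine ⟨Eq.trans_le ?_ (one_sub_inv_le_log_of_pos hdiv),
    (log_le_sub_one_of_pos hdiv).trans_eq ?_⟩ <;> field_simp <;> ring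

-- Both `f n` and `c * log ((n + 1) / n)` lie between `c / (n + 1)` and `c / n`.
lemma abs_sum_Ico_sub_mul_log_le (hlow : ∀ n : ℕ, 1 ≤ n → c / (n + 1) ≤ f n)
    (hupp : ∀ n : ℕ, 1 ≤ n → f n ≤ c / n) {m M : ℕ} (hm : 1 ≤ m) (hmM : m ≤ M) :
    |∑ n ∈ Finset.Ico m M, f n - c * (Real.log M - Real.log m)| ≤ c / m - c / M := by
  have hc : 0 ≤ c := by
    have := (hlow 1 le_rfl).trans (hupp 1 le_rfl)
    rw [Nat.cast_one, div_one, one_add_one_eq_two] at this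
    linarith
  have hterm (n : ℕ) (hn : n ∈ Finset.Ico m M) :
      |f n - c * (Real.log (n + 1 : ℕ) - Real.log n)| ≤ c / n - c / (n + 1 : ℕ) := by
    have hn1 : 1 ≤ n := hm.trans (Finset.mem_Ico.1 hn).1
    obtain ⟨hle_log, hlog_le⟩ := log_add_one_sub_log_mem_Icc (x := n) (by exact_mod_cast hn1)
    rw [Nat.cast_succ]
    exact abs_sub_le_of_le_of_le (hlow n hn1) (hupp n hn1)
      (mul_le_mul_of_nonneg_left hle_log hc) (mul_le_mul_of_nonneg_left hlog_le hc)
  calc |∑ n ∈ Finset.Ico m M, f n - c * (Real.log M - Real.log m)|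
      = |∑ n ∈ Finset.Ico m M, (f n - c * (Real.log (n + 1 : ℕ) - Real.log n))| := by
        rw [Finset.sum_sub_distrib, ← Finset.mul_sum,
          Finset.sum_Ico_sub (fun n : ℕ => Real.log n) hmM]
    _ ≤ ∑ n ∈ Finset.Ico m M, (c / n - c / (n + 1 : ℕ)) :=
        (Finset.abs_sum_le_sum_abs _ _).trans (Finset.sum_le_sum hterm)
    _ = c / m - c / M := by
        rw [← neg_sub (c / (M : ℝ)), ← Finset.sum_Ico_sub (fun n : ℕ => c / (n : ℝ)) hmM,
          ← Finset.sum_neg_distrib]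
        simp

lemma tendsto_sum_Ico_mul_log (hlow : ∀ n : ℕ, 1 ≤ n → c / (n + 1) ≤ f n)
    (hupp : ∀ n : ℕ, 1 ≤ n → f n ≤ c / n) {b : ℕ} (hb : 1 ≤ b) :
    Tendsto (fun N : ℕ => ∑ n ∈ Finset.Ico (N + 1) (b * (N + 1)), f n) atTop
      (𝓝 (c * Real.log b)) := by
  have hb0 : (b : ℝ) ≠ 0 := by positivity
  have hlog (N : ℕ) : Real.log (b * (N + 1) : ℕ) - Real.log (N + 1 : ℕ) = Real.log b := by
    rw [Nat.cast_mul, log_mul hb0 (by positivity), add_sub_cancel_right]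
  have herr (N : ℕ) : c / (N + 1 : ℕ) - c / (b * (N + 1) : ℕ) =
      (c - c / b) * ((N : ℝ) + 1)⁻¹ := by
    push_cast
    field_simp
  rw [tendsto_iff_norm_sub_tendsto_zero]
  refine squeeze_zero (fun _ => norm_nonneg _) (fun N => ?_)
    (by simpa using tendsto_one_div_add_atTop_nhds_zero_nat.const_mul (c - c / b))
  rw [← herr, ← hlog N]
  exact abs_sum_Ico_sub_mul_log_le hlow hupp N.succ_pos (Nat.le_mul_of_pos_left _ hb)

lemma hasSum_inv_sub_of_digit_recursion {b : ℕ} (hb : 1 ≤ b)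
    (hrec : ∀ n : ℕ, 1 ≤ n → f n = (n : ℝ)⁻¹ + ∑ i ∈ Finset.Ico 1 b, f (b * n + i))
    (hlow : ∀ n : ℕ, 1 ≤ n → b / ((n : ℝ) + 1) ≤ f n) (hupp : ∀ n : ℕ, 1 ≤ n → f n ≤ b / n) :
    HasSum (fun k : ℕ => ((k : ℝ) + 1)⁻¹ - f (b * (k + 1)))
      (∑ n ∈ Finset.Ico 1 b, f n - b * Real.log b) := by
  have hnonneg (k : ℕ) : 0 ≤ ((k : ℝ) + 1)⁻¹ - f (b * (k + 1)) := by
    have hb0 : (b : ℝ) ≠ 0 := by positivity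
    have := hupp (b * (k + 1)) (Nat.mul_pos hb k.succ_pos)
    rwa [Nat.cast_mul, div_mul_cancel_left₀ hb0, Nat.cast_succ, ← sub_nonneg] at this
  rw [hasSum_iff_tendsto_nat_of_nonneg hnonneg]
  refine (tendsto_const_nhds.sub (tendsto_sum_Ico_mul_log hlow hupp hb)).congr fun N => ?_
  rw [sub_eq_iff_eq_add', sum_Ico_eq_add_sum_range_of_digit_recursion hb hrec N]
  simp only [Nat.cast_succ]

end Logarithm

lemma hasSum_zetaVal {s : ℕ} (hs : 1 < s) :
    HasSum (fun k : ℕ => (((k : ℝ) + 1) ^ s)⁻¹) (zetaVal s) := by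
  refine Summable.hasSum ?_
  simpa using (summable_nat_add_iff 1).2 (Real.summable_nat_pow_inv.2 hs)

lemma hasSum_mul_zetaVal_div_pow {c s : ℕ → ℝ} {a C β : ℝ} (hc : ∀ m, |c m| ≤ C) (hβ : 1 < β)
    (hs : ∀ k : ℕ, HasSum (fun m => c m / (β * (k + 1)) ^ (m + 2)) (s k)) (ha : HasSum s a) :
    HasSum (fun m => c m * zetaVal (m + 2) / β ^ (m + 2)) a := by
  have : 0 < β := one_pos.trans hβ
  have hC : 0 ≤ C := (abs_nonneg _).trans (hc 0)
  have hbound (k m : ℕ) :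
      |c m / (β * (k + 1)) ^ (m + 2)| ≤ C * ((((k : ℝ) + 1) ^ 2)⁻¹ * β⁻¹ ^ m) := by
    rw [abs_div, abs_of_pos (by positivity : 0 < (β * ((k : ℝ) + 1)) ^ (m + 2)), div_eq_mul_inv,
      inv_pow, ← mul_inv, mul_comm (_ ^ 2), mul_pow]
    have : β ^ m ≤ β ^ (m + 2) := pow_le_pow_right₀ hβ.le (by lia)
    have : ((k : ℝ) + 1) ^ 2 ≤ (k + 1) ^ (m + 2) := pow_le_pow_right₀ (by simp) (by lia)
    gcongr
    exact hc m
  have hsum : Summable fun p : ℕ × ℕ => c p.2 / (β * (p.1 + 1)) ^ (p.2 + 2) := by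
    refine .of_norm_bounded (Summable.mul_left C ?_) fun p => hbound p.1 p.2
    exact (hasSum_zetaVal one_lt_two).summable.mul_of_nonneg
      (summable_geometric_of_lt_one (by positivity) (inv_lt_one_of_one_lt₀ hβ))
      (fun k => by positivity) (fun m => by positivity)
  have hcol (m : ℕ) : HasSum (fun k : ℕ => c m / (β * (k + 1)) ^ (m + 2))
      (c m * zetaVal (m + 2) / β ^ (m + 2)) := by
    rw [← div_mul_eq_mul_div]
    refine ((hasSum_zetaVal (by lia : 1 < m + 2)).mul_left (c m / β ^ (m + 2))).congr_fun
      fun k => ?_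
    rw [mul_pow, ← div_div, div_eq_mul_inv (c m / _)]
  have htotal := hsum.hasSum
  rw [← (htotal.prod_fiberwise hs).unique ha]
  exact ((Equiv.prodComm ℕ ℕ).hasSum_iff.2 htotal).prod_fiberwise hcol

/-- The Stieltjes transform `U(z) = ∫ (z + x)⁻¹ dμ(x)`. -/
noncomputable def stieltjesTransform (μ : Measure ℝ) (z : ℝ) : ℝ := ∫ x, (z + x)⁻¹ ∂μ

lemma hasSum_inv_sub_inv_add {z x : ℝ} (h : |x| < z) :
    HasSum (fun m : ℕ => (-1) ^ m * x ^ (m + 1) / z ^ (m + 2)) (z⁻¹ - (z + x)⁻¹) := by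
  have hz : 0 < z := (abs_nonneg x).trans_lt h
  have hzx : 0 < z + x := by linarith [neg_lt_of_abs_lt h]
  have hratio : |-(x / z)| < 1 := by rwa [abs_neg, abs_div, abs_of_pos hz, div_lt_one hz]
  have hsum : x / z ^ 2 * (1 - -(x / z))⁻¹ = z⁻¹ - (z + x)⁻¹ := by
    have hfactor : 1 - -(x / z) = (z + x) / z := by field_simp; ring
    rw [hfactor]
    field_simp
    ring
  rw [← hsum]
  refine ((hasSum_geometric_of_abs_lt_one hratio).mul_left (x / z ^ 2)).congr_fun fun m => ?_
  rw [neg_pow (x / z), div_pow]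
  field_simp
  ring

section UnitInterval

variable {μ : Measure ℝ}

lemma ae_norm_pow_le_one (hμ : ∀ᵐ x ∂μ, x ∈ Set.Icc (0 : ℝ) 1) (m : ℕ) :
    ∀ᵐ x ∂μ, ‖x ^ m‖ ≤ 1 := by
  filter_upwards [hμ] with x hx
  rw [norm_pow, norm_of_nonneg hx.1]
  exact pow_le_one₀ hx.1 hx.2

variable [IsFiniteMeasure μ]

lemma integrable_inv_add (hμ : ∀ᵐ x ∂μ, 0 ≤ x) {z : ℝ} (hz : 0 < z) :
    Integrable (fun x => (z + x)⁻¹) μ := by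
  refine .of_bound (by fun_prop) z⁻¹ ?_
  filter_upwards [hμ] with x hx
  rw [norm_of_nonneg (by positivity)]
  gcongr
  linarith

lemma stieltjesTransform_le (hμ : ∀ᵐ x ∂μ, 0 ≤ x) {z : ℝ} (hz : 0 < z) :
    stieltjesTransform μ z ≤ μ.real Set.univ / z := by
  rw [div_eq_mul_inv, ← smul_eq_mul, ← integral_const]
  refine integral_mono_ae (integrable_inv_add hμ hz) (integrable_const _) ?_
  filter_upwards [hμ] with x hx
  gcongr
  linarith

variable (hμ : ∀ᵐ x ∂μ, x ∈ Set.Icc (0 : ℝ) 1)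
include hμ

lemma le_stieltjesTransform {z : ℝ} (hz : 0 < z) :
    μ.real Set.univ / (z + 1) ≤ stieltjesTransform μ z := by
  rw [div_eq_mul_inv, ← smul_eq_mul, ← integral_const]
  refine integral_mono_ae (integrable_const _)
    (integrable_inv_add (hμ.mono fun _ hx => hx.1) hz) ?_
  filter_upwards [hμ] with x hx
  have := hx.1
  gcongr
  exact hx.2

lemma abs_integral_pow_le (m : ℕ) : |∫ x, x ^ m ∂μ| ≤ μ.real Set.univ := by
  simpa using norm_integral_le_of_norm_le_const (ae_norm_pow_le_one hμ m)

lemma hasSum_stieltjesTransform {z : ℝ} (hz : 1 < z) :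
    HasSum (fun m : ℕ => (-1) ^ m * (∫ x, x ^ (m + 1) ∂μ) / z ^ (m + 2))
      (μ.real Set.univ / z - stieltjesTransform μ z) := by
  have hz0 : 0 < z := one_pos.trans hz
  have hgeom : Summable fun m : ℕ => z⁻¹ ^ (m + 2) :=
    (summable_nat_add_iff 2).2
      (summable_geometric_of_lt_one (by positivity) (inv_lt_one_of_one_lt₀ hz))
  have hseries := hasSum_integral_of_dominated_convergence (μ := μ)
    (F := fun (m : ℕ) x => (-1) ^ m * x ^ (m + 1) / z ^ (m + 2))
    (f := fun x => z⁻¹ - (z + x)⁻¹) (fun m _ => z⁻¹ ^ (m + 2))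
    (fun m => by fun_prop) (fun m => ?_) (.of_forall fun _ => hgeom) (integrable_const _) ?_
  · rw [integral_sub (integrable_const _) (integrable_inv_add (hμ.mono fun _ hx => hx.1) hz0),
      integral_const, smul_eq_mul, ← div_eq_mul_inv] at hseries
    simpa only [integral_div, integral_const_mul, stieltjesTransform] using hseries
  · filter_upwards [ae_norm_pow_le_one hμ (m + 1)] with x hx
    rw [norm_div, norm_mul, norm_pow (-1 : ℝ), norm_neg, norm_one, one_pow, one_mul,
      norm_of_nonneg (by positivity : 0 ≤ z ^ (m + 2)), inv_pow, ← one_div]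
    gcongr
  · filter_upwards [hμ] with x hx
    exact hasSum_inv_sub_inv_add (by rw [abs_of_nonneg hx.1]; exact hx.2.trans_lt hz)

lemma integrable_pow (m : ℕ) : Integrable (fun x => x ^ m) μ :=
  .of_bound (by fun_prop) 1 (ae_norm_pow_le_one hμ m)

variable (hpos : 0 < μ (Set.Ioo 0 1))
include hpos

lemma integral_pow_mul_one_sub_pow_pos (m n : ℕ) : 0 < ∫ x, x ^ m * (1 - x) ^ n ∂μ := by
  have hint : Integrable (fun x => x ^ m * (1 - x) ^ n) μ := by
    refine (integrable_pow hμ m).mul_bdd (c := 1) (by fun_prop) ?_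
    filter_upwards [hμ] with x hx
    rw [norm_pow, norm_of_nonneg (by linarith [hx.2])]
    exact pow_le_one₀ (by linarith [hx.2]) (by linarith [hx.1])
  rw [integral_pos_iff_support_of_nonneg_ae ?_ hint]
  · refine hpos.trans_le (measure_mono fun x hx => ?_)
    exact mul_ne_zero (pow_ne_zero m hx.1.ne') (pow_ne_zero n (sub_pos.2 hx.2).ne')
  · filter_upwards [hμ] with x hx
    exact mul_nonneg (pow_nonneg hx.1 m) (pow_nonneg (sub_nonneg.2 hx.2) n)

lemma integral_pow_pos (m : ℕ) : 0 < ∫ x, x ^ m ∂μ := by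
  simpa using integral_pow_mul_one_sub_pow_pos hμ hpos m 0

lemma integral_pow_succ_lt (m : ℕ) : ∫ x, x ^ (m + 1) ∂μ < ∫ x, x ^ m ∂μ := by
  rw [← sub_pos, ← integral_sub (integrable_pow hμ m) (integrable_pow hμ (m + 1))]
  simpa [mul_sub, pow_succ] using integral_pow_mul_one_sub_pow_pos hμ hpos m 1

end UnitInterval

section Words

variable {α : Type*}

lemma tsum_list_eq_add_tsum_cons (f : List α → ℝ≥0∞) :
    ∑' w, f w = f [] + ∑' a, ∑' w, f (a :: w) := by
  let e : Unit ⊕ α × List α ≃ List α :=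
    { toFun := Sum.elim (fun _ => []) (fun p => p.1 :: p.2)
      invFun := fun w => w.casesOn (.inl ()) (fun a w => .inr (a, w))
      left_inv := by rintro (_ | _) <;> rfl
      right_inv := by rintro (_ | _) <;> rfl }
  rw [← e.tsum_eq, Summable.tsum_sum ENNReal.summable ENNReal.summable, ← ENNReal.tsum_prod]
  simp [e]

lemma tsum_pow_list_length [Fintype α] (r : ℝ≥0∞) :
    ∑' w : List α, r ^ w.length = (1 - Fintype.card α * r)⁻¹ := by
  rw [← List.equivSigmaTuple.symm.tsum_eq, ENNReal.tsum_sigma', ← ENNReal.tsum_geometric]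
  simp [List.equivSigmaTuple, mul_pow]

lemma sum_list_eq_add_sum_cons {Ω : Type*} [MeasurableSpace Ω] (m : List α → Measure Ω) :
    Measure.sum m = m [] + Measure.sum fun a => Measure.sum fun w => m (a :: w) := by
  ext s hs
  simp only [Measure.add_apply, Measure.sum_apply _ hs]
  exact tsum_list_eq_add_tsum_cons fun w => m w s

end Words

/-- The set `A` of admissible digits: those base-`b` digits that do not belong to `E`. -/
def admissibleDigits (b : ℕ) (E : Finset ℕ) : Finset ℕ := Finset.range b \ E

section Digits

variable {b : ℕ} {E : Finset ℕ}

lemma mem_admissibleDigits {d : ℕ} : d ∈ admissibleDigits b E ↔ d < b ∧ d ∉ E := by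
  simp [admissibleDigits]

/-- Strings of admissible digits as words over the alphabet `A`. The word lists the leading digit
first, whereas the string lists the units digit first, as `Nat.ofDigits` does. -/
def wordEquiv (b : ℕ) (E : Finset ℕ) :
    List (admissibleDigits b E) ≃ {l : List ℕ // ∀ d ∈ l, d < b ∧ d ∉ E} where
  toFun w := ⟨(w.map (↑)).reverse, by simp +contextual [mem_admissibleDigits]⟩
  invFun X := (X.1.attachWith (· ∈ admissibleDigits b E)
    fun d hd => mem_admissibleDigits.2 (X.2 d hd)).reverse
  left_inv w := by
    apply List.map_injective_iff.2 Subtype.val_injective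
    simp
  right_inv X := by simp

/-- The real number `0.a₁a₂…aₗ` in base `b`. -/
noncomputable def radixPoint (b : ℕ) : List (admissibleDigits b E) → ℝ
  | [] => 0
  | a :: w => ((a : ℕ) + radixPoint b w) / b

lemma ofDigits_wordEquiv_div (hb : b ≠ 0) (w : List (admissibleDigits b E)) :
    (Nat.ofDigits b (wordEquiv b E w).1 : ℕ) / (b : ℝ) ^ (wordEquiv b E w).1.length =
      radixPoint b w := by
  induction w with
  | nil => simp [wordEquiv, radixPoint]
  | cons a w ih =>
    have hb0 : (b : ℝ) ≠ 0 := by exact_mod_cast hb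
    simp only [wordEquiv, radixPoint, Equiv.coe_fn_mk] at ih ⊢
    rw [← ih]
    rw [List.map_cons, List.reverse_cons, Nat.ofDigits_append, Nat.ofDigits_singleton,
      List.length_append, List.length_singleton, List.length_reverse, pow_succ, Nat.cast_add,
      Nat.cast_mul, Nat.cast_pow]
    field_simp
    ring

lemma kempnerMeasure_eq_sum_words (hb : b ≠ 0) :
    kempnerMeasure b E = Measure.sum fun w : List (admissibleDigits b E) =>
      (b : ℝ≥0∞)⁻¹ ^ w.length • Measure.dirac (radixPoint b w) := by
  rw [kempnerMeasure, ← Measure.sum_comp_equiv (wordEquiv b E)]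
  congr 1 with w : 1
  rw [Function.comp_apply, ofDigits_wordEquiv_div hb]
  simp [wordEquiv, ENNReal.inv_pow]

lemma kempnerMeasure_self_similar (hb : b ≠ 0) :
    kempnerMeasure b E = Measure.dirac 0 + ∑ a ∈ admissibleDigits b E,
      (b : ℝ≥0∞)⁻¹ • (kempnerMeasure b E).map fun x : ℝ => (a + x) / b := by
  have hmeas (a : ℕ) : Measurable fun x : ℝ => (a + x) / b := by fun_prop
  conv_lhs => rw [kempnerMeasure_eq_sum_words hb, sum_list_eq_add_sum_cons]
  rw [← Measure.sum_coe_finset, kempnerMeasure_eq_sum_words hb]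
  congr 1
  · simp [radixPoint]
  · congr 1 with a : 1
    ext s hs
    rw [Measure.map_sum (hmeas a).aemeasurable, Measure.smul_apply, Measure.sum_apply _ hs,
      Measure.sum_apply _ hs, smul_eq_mul, ← ENNReal.tsum_mul_left]
    congr 1 with w
    rw [Measure.map_smul, Measure.map_dirac' (hmeas a), Measure.smul_apply, Measure.smul_apply,
      smul_eq_mul, smul_eq_mul, ← mul_assoc, List.length_cons, pow_succ']
    rfl

lemma kempnerMeasure_univ (hb : b ≠ 0) :
    kempnerMeasure b E Set.univ = (1 - (admissibleDigits b E).card * (b : ℝ≥0∞)⁻¹)⁻¹ := by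
  rw [kempnerMeasure_eq_sum_words hb, Measure.sum_apply _ .univ,
    ← Fintype.card_coe, ← tsum_pow_list_length]
  simp

lemma isFiniteMeasure_kempnerMeasure (h : (admissibleDigits b E).card < b) :
    IsFiniteMeasure (kempnerMeasure b E) := by
  have hb : b ≠ 0 := by lia
  refine ⟨?_⟩
  rw [kempnerMeasure_univ hb, ENNReal.inv_lt_top, tsub_pos_iff_lt, ← div_eq_mul_inv]
  exact ENNReal.div_lt_of_lt_mul (by simpa using h)

lemma kempnerMeasure_real_univ (h : (admissibleDigits b E).card < b) :
    (kempnerMeasure b E).real Set.univ = b / (b - (admissibleDigits b E).card) := by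
  have hb : (b : ℝ) ≠ 0 := by exact_mod_cast (by lia : b ≠ 0)
  have hle : (admissibleDigits b E).card * (b : ℝ≥0∞)⁻¹ ≤ 1 := by
    rw [← div_eq_mul_inv]
    exact ENNReal.div_le_of_le_mul (by simpa using h.le)
  rw [measureReal_def, kempnerMeasure_univ (by lia), ENNReal.toReal_inv,
    ENNReal.toReal_sub_of_le hle ENNReal.one_ne_top, ENNReal.toReal_mul, ENNReal.toReal_inv,
    ENNReal.toReal_one, ENNReal.toReal_natCast, ENNReal.toReal_natCast, ← div_eq_mul_inv,
    one_sub_div hb, inv_div]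

lemma ae_mem_Ico_kempnerMeasure (hb : 1 < b) :
    ∀ᵐ x ∂kempnerMeasure b E, x ∈ Set.Ico (0 : ℝ) 1 := by
  rw [kempnerMeasure, Measure.ae_sum_iff]
  intro X
  refine Measure.ae_smul_measure ?_ _
  refine (ae_dirac_iff measurableSet_Ico).2 ⟨by positivity, (div_lt_one (by positivity)).2 ?_⟩
  exact_mod_cast Nat.ofDigits_lt_base_pow_length hb fun d hd => (X.2 d hd).1

lemma ae_mem_Icc_kempnerMeasure (hb : 1 < b) :
    ∀ᵐ x ∂kempnerMeasure b E, x ∈ Set.Icc (0 : ℝ) 1 :=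
  (ae_mem_Ico_kempnerMeasure hb).mono fun _ hx => Set.Ico_subset_Icc_self hx

lemma stieltjesTransform_kempnerMeasure_eq (hb : 1 < b) [IsFiniteMeasure (kempnerMeasure b E)]
    {z : ℝ} (hz : ∀ a ∈ admissibleDigits b E, 0 < b * z + a) :
    stieltjesTransform (kempnerMeasure b E) z =
      z⁻¹ + ∑ a ∈ admissibleDigits b E, stieltjesTransform (kempnerMeasure b E) (b * z + a) := by
  have hb0 : (b : ℝ) ≠ 0 := by positivity
  have hinv (a : ℕ) (x : ℝ) : (z + (a + x) / b)⁻¹ = b * (b * z + a + x)⁻¹ := by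
    rw [← div_eq_mul_inv, ← inv_div]
    field_simp
    ring
  have hmeas (a : ℕ) : AEMeasurable (fun x : ℝ => (a + x) / b) (kempnerMeasure b E) := by fun_prop
  have hmeas_inv (ν : Measure ℝ) : AEStronglyMeasurable (fun x : ℝ => (z + x)⁻¹) ν := by fun_prop
  have hint (a : ℕ) (ha : a ∈ admissibleDigits b E) : Integrable (fun x => (z + x)⁻¹)
      ((b : ℝ≥0∞)⁻¹ • (kempnerMeasure b E).map fun x : ℝ => (a + x) / b) := by
    refine .smul_measure ?_ (by simpa using (by lia : b ≠ 0))
    rw [integrable_map_measure (hmeas_inv _) (hmeas a)]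
    simp only [Function.comp_def, hinv]
    exact (integrable_inv_add ((ae_mem_Icc_kempnerMeasure hb).mono fun _ hx => hx.1)
      (hz a ha)).const_mul _
  conv_lhs => rw [stieltjesTransform, kempnerMeasure_self_similar (by lia),
    integral_add_measure (integrable_dirac (by simp)) (integrable_finsetSum_measure.2 hint),
    integral_finsetSum_measure hint, integral_dirac, add_zero]
  congr 1
  refine Finset.sum_congr rfl fun a _ => ?_
  rw [integral_smul_measure, integral_map (hmeas a) (hmeas_inv _)]
  simp only [hinv, integral_const_mul, stieltjesTransform]
  rw [ENNReal.toReal_inv, ENNReal.toReal_natCast, smul_eq_mul, inv_mul_cancel_left₀ hb0]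

lemma digits_ofDigits_of_notMem (hb : 1 < b) (hE : 0 ∈ E) {l : List ℕ}
    (hl : ∀ d ∈ l, d < b ∧ d ∉ E) : Nat.digits b (Nat.ofDigits b l) = l :=
  Nat.digits_ofDigits b hb l (fun d hd => (hl d hd).1)
    fun hne h0 => (hl _ (List.getLast_mem hne)).2 (h0 ▸ hE)

lemma kempnerSum_eq_stieltjesTransform_zero (hb : 1 < b) (hE : 0 ∈ E) :
    kempnerSum b E = stieltjesTransform (kempnerMeasure b E) 0 := by
  let value (X : {l : List ℕ // ∀ d ∈ l, d < b ∧ d ∉ E}) : ℕ := Nat.ofDigits b X.1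
  have hdigits (X) : Nat.digits b (value X) = X.1 := digits_ofDigits_of_notMem hb hE X.2
  have hvalue : Function.Injective value := fun X Y h => Subtype.ext <| by
    rw [← hdigits X, h, hdigits Y]
  rw [kempnerSum, stieltjesTransform, kempnerMeasure,
    integral_sum_dirac (by simp [(by lia : b ≠ 0)]), ← hvalue.tsum_eq]
  · congr 1 with X
    -- The empty string has value `0`, where the convention `0⁻¹ = 0` removes it from the integral.
    have hterm : (if value X ≠ 0 ∧ ∀ d ∈ Nat.digits b (value X), d ∉ E then (value X : ℝ)⁻¹
        else 0) = (value X : ℝ)⁻¹ := by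
      rw [ite_eq_left_iff]
      intro h
      have : value X = 0 := by
        by_contra h0
        exact h ⟨h0, fun d hd => (X.2 d (hdigits X ▸ hd)).2⟩
      simp [this]
    have hb0 : (b : ℝ) ≠ 0 := by positivity
    rw [hterm, zero_add, inv_div, ENNReal.toReal_inv, ENNReal.toReal_pow, ENNReal.toReal_natCast,
      smul_eq_mul, inv_mul_eq_div, div_div_cancel_left' (pow_ne_zero _ hb0)]
  · intro n hn
    have hn' : n ≠ 0 ∧ ∀ d ∈ Nat.digits b n, d ∉ E := by
      by_contra h
      exact hn (if_neg h)
    exact ⟨⟨Nat.digits b n, fun d hd => ⟨Nat.digits_lt_base hb hd, hn'.2 d hd⟩⟩,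
      Nat.ofDigits_digits b n⟩

lemma kempnerMeasure_Ioo_pos (hb : 1 < b) {a : ℕ} (ha0 : a ≠ 0)
    (ha : a ∈ admissibleDigits b E) : 0 < kempnerMeasure b E (Set.Ioo 0 1) := by
  have hb0 : (0 : ℝ) < b := by positivity
  have hmem : (a / b : ℝ) ∈ Set.Ioo (0 : ℝ) 1 :=
    ⟨by positivity, (div_lt_one hb0).2 (by exact_mod_cast (mem_admissibleDigits.1 ha).1)⟩
  rw [kempnerMeasure_eq_sum_words (by lia)]
  refine lt_of_lt_of_le ?_ (Measure.le_sum _ [⟨a, ha⟩] _)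
  simp [radixPoint, hmem]

end Digits

section ZeroDigit

variable {b : ℕ}

lemma admissibleDigits_singleton_zero (b : ℕ) : admissibleDigits b {0} = Finset.Ico 1 b := by
  ext d
  rw [mem_admissibleDigits, Finset.notMem_singleton, Finset.mem_Ico]
  lia

lemma card_admissibleDigits_singleton_zero_lt (hb : 1 ≤ b) :
    (admissibleDigits b {0}).card < b := by
  rw [admissibleDigits_singleton_zero, Nat.card_Ico]
  lia

lemma isFiniteMeasure_kempnerMeasure_singleton_zero (hb : 1 ≤ b) :
    IsFiniteMeasure (kempnerMeasure b {0}) :=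
  isFiniteMeasure_kempnerMeasure (card_admissibleDigits_singleton_zero_lt hb)

lemma kempnerMeasure_singleton_zero_real_univ (hb : 1 ≤ b) :
    (kempnerMeasure b {0}).real Set.univ = b := by
  rw [kempnerMeasure_real_univ (card_admissibleDigits_singleton_zero_lt hb),
    admissibleDigits_singleton_zero, Nat.card_Ico, Nat.cast_sub hb]
  simp

lemma uMoment_eq_integral (hb : 1 < b) (m : ℕ) :
    uMoment b m = ∫ x, x ^ m ∂kempnerMeasure b {0} := by
  rw [uMoment, Measure.restrict_eq_self_of_ae_mem (ae_mem_Ico_kempnerMeasure hb)]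

lemma kempnerMeasure_singleton_zero_Ioo_pos (hb : 1 < b) :
    0 < kempnerMeasure b {0} (Set.Ioo 0 1) :=
  kempnerMeasure_Ioo_pos hb one_ne_zero (mem_admissibleDigits.2 ⟨hb, by simp⟩)

lemma stieltjesTransform_kempnerMeasure_singleton_zero (hb : 1 < b) {z : ℝ} (hz : 0 ≤ z) :
    stieltjesTransform (kempnerMeasure b {0}) z =
      z⁻¹ + ∑ a ∈ Finset.Ico 1 b, stieltjesTransform (kempnerMeasure b {0}) (b * z + a) := by
  have := isFiniteMeasure_kempnerMeasure_singleton_zero hb.le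
  rw [← admissibleDigits_singleton_zero]
  refine stieltjesTransform_kempnerMeasure_eq hb fun a ha => ?_
  rw [admissibleDigits_singleton_zero, Finset.mem_Ico] at ha
  have : (0 : ℝ) < a := by exact_mod_cast ha.1
  positivity

lemma kempnerSum_singleton_zero_eq_sum (hb : 1 < b) :
    kempnerSum b {0} = ∑ a ∈ Finset.Ico 1 b, stieltjesTransform (kempnerMeasure b {0}) a := by
  rw [kempnerSum_eq_stieltjesTransform_zero hb (Finset.mem_singleton_self 0),
    stieltjesTransform_kempnerMeasure_singleton_zero hb le_rfl]
  simp

lemma hasSum_inv_sub_stieltjesTransform_kempnerMeasure (hb : 1 < b) :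
    HasSum (fun k : ℕ => ((k : ℝ) + 1)⁻¹ -
      stieltjesTransform (kempnerMeasure b {0}) (b * (k + 1)))
      (kempnerSum b {0} - b * Real.log b) := by
  have := isFiniteMeasure_kempnerMeasure_singleton_zero hb.le
  have hmass := kempnerMeasure_singleton_zero_real_univ hb.le
  have hIcc := ae_mem_Icc_kempnerMeasure (E := {0}) hb
  rw [kempnerSum_singleton_zero_eq_sum hb]
  have hrecursion := hasSum_inv_sub_of_digit_recursion hb.le
    (f := fun n => stieltjesTransform (kempnerMeasure b {0}) n) (fun n _ => ?_)
    (fun n hn => ?_) (fun n hn => ?_)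
  · simpa using hrecursion
  · simpa using stieltjesTransform_kempnerMeasure_singleton_zero hb n.cast_nonneg
  · simpa only [hmass] using le_stieltjesTransform hIcc (Nat.cast_pos.2 hn)
  · simpa only [hmass] using
      stieltjesTransform_le (hIcc.mono fun _ hx => hx.1) (Nat.cast_pos.2 hn)

lemma hasSum_uMoment_mul_zetaVal (hb : 1 < b) :
    HasSum (fun m : ℕ => (-1) ^ m * uMoment b (m + 1) * zetaVal (m + 2) / (b : ℝ) ^ (m + 2))
      (kempnerSum b {0} - b * Real.log b) := by
  have := isFiniteMeasure_kempnerMeasure_singleton_zero hb.le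
  have hmass := kempnerMeasure_singleton_zero_real_univ hb.le
  have hIcc := ae_mem_Icc_kempnerMeasure (E := {0}) hb
  have hb1 : (1 : ℝ) < b := by exact_mod_cast hb
  simp only [uMoment_eq_integral hb]
  refine hasSum_mul_zetaVal_div_pow (C := b) (fun m => ?_) hb1 (fun k => ?_)
    (hasSum_inv_sub_stieltjesTransform_kempnerMeasure hb)
  · simpa [abs_mul, hmass] using abs_integral_pow_le hIcc (m + 1)
  · have hz : 1 < (b : ℝ) * (k + 1) :=
      hb1.trans_le (le_mul_of_one_le_right (by positivity) (by simp))
    have hseries := hasSum_stieltjesTransform hIcc hz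
    rwa [hmass, div_mul_cancel_left₀ (by positivity)] at hseries

end ZeroDigit

theorem kempner_zero_digit_series (b : ℕ) (hb : 2 ≤ b) :
    Summable (fun m : ℕ =>
      (-1 : ℝ) ^ m * zetaVal (m + 2) * uMoment b (m + 1) / (b : ℝ) ^ (m + 2)) ∧
    kempnerSum b {0} = (b : ℝ) * Real.log b +
      ∑' m : ℕ, (-1 : ℝ) ^ m * zetaVal (m + 2) * uMoment b (m + 1) / (b : ℝ) ^ (m + 2) ∧
    (∀ m : ℕ, 1 ≤ m → 0 < uMoment b m) ∧
    (∀ m : ℕ, 1 ≤ m → uMoment b (m + 1) < uMoment b m) := by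
  have hIcc := ae_mem_Icc_kempnerMeasure (E := {0}) hb
  have := isFiniteMeasure_kempnerMeasure_singleton_zero (b := b) (by lia)
  have hpos := kempnerMeasure_singleton_zero_Ioo_pos hb
  have hsum := hasSum_uMoment_mul_zetaVal hb
  simp only [mul_right_comm _ (uMoment b _)] at hsum
  refine ⟨hsum.summable, by rw [hsum.tsum_eq, add_sub_cancel], fun m _ => ?_, fun m _ => ?_⟩
  · simpa only [uMoment_eq_integral hb] using integral_pow_pos hIcc hpos m
  · simpa only [uMoment_eq_integral hb] using integral_pow_succ_lt hIcc hpos m
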